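/- Let m ≥ 1 and let f, Ω be axially symmetric functions, with f three times and Ω once continuously differentiable on a neighborhood of the closure of D_m, satisfying ∂_r² f + (3/r) ∂_r f + ∂_{x₃}² f = ∂_{x₃} Ω in D_m, with f = 0 on ∂^V D_m, ∂_{x₃} f = 0 on ∂^H D_m and on ∂^V D_m, and Ω = 0 on ∂D_m. Then (∫_{D_m} |∇f|² dx)^{1/2} ≤ (∫_{D_m} Ω² dx)^{1/2} and (∫_{D_m} |∇ ∂_{x₃} f|² dx)^{1/2} ≤ (∫_{D_m} |∂_{x₃} Ω|² dx)^{1/2}. -/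

import Mathlib

noncomputable section

open Real MeasureTheory Set

/-- Inner radius of the `j`-th rectangle: `r_j = 2^(-j)`. -/
def rW (j : ℕ) : ℝ := (2 : ℝ) ^ (-(j : ℝ))

/-- Height of the `j`-th rectangle: `h_j = 2^(-β (j-1))`. -/
def hH (β : ℝ) (j : ℕ) : ℝ := (2 : ℝ) ^ (-β * ((j : ℝ) - 1))

/-- The rectangle `S_j` in the `(r, x₃)` cross-section. -/
def Srect (β : ℝ) (j : ℕ) : Set (ℝ × ℝ) :=
  {p : ℝ × ℝ | rW j ≤ p.1 ∧ p.1 < rW (j - 1) ∧ 0 < p.2 ∧ p.2 < hH β j}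

/-- The `(r, x₃)` cross-section of the domain `D_m`. -/
def Ddom (β : ℝ) (m : ℕ) : Set (ℝ × ℝ) := ⋃ j ∈ Finset.Icc 1 m, Srect β j

/-- The horizontal part `∂^H D_m` of the boundary of `D_m` (where `x₃` is locally constant). -/
def bdH (β : ℝ) (m : ℕ) : Set (ℝ × ℝ) :=
  {p : ℝ × ℝ | p.2 = 0 ∧ rW m ≤ p.1 ∧ p.1 ≤ 1} ∪
    ⋃ j ∈ Finset.Icc 1 m,
      {p : ℝ × ℝ | p.2 = hH β j ∧ rW j ≤ p.1 ∧ p.1 ≤ rW (j - 1)}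

/-- The vertical part `∂^V D_m` of the boundary of `D_m` (where `r` is locally constant). -/
def bdV (β : ℝ) (m : ℕ) : Set (ℝ × ℝ) :=
  {p : ℝ × ℝ | p.1 = 1 ∧ 0 ≤ p.2 ∧ p.2 ≤ 1} ∪
    {p : ℝ × ℝ | p.1 = rW m ∧ 0 ≤ p.2 ∧ p.2 ≤ hH β m} ∪
    ⋃ j ∈ Finset.Icc 1 (m - 1),
      {p : ℝ × ℝ | p.1 = rW j ∧ hH β (j + 1) ≤ p.2 ∧ p.2 ≤ hH β j}

/-- The full boundary `∂ D_m` of `D_m`. -/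
def bdD (β : ℝ) (m : ℕ) : Set (ℝ × ℝ) := bdH β m ∪ bdV β m

/-- The corner points of the polygonal cross-section of `D_m`
(i.e. the corner circles of the 3D domain). -/
def cornerSet (β : ℝ) (m : ℕ) : Set (ℝ × ℝ) :=
  ({(rW m, 0), ((1 : ℝ), 0), ((1 : ℝ), (1 : ℝ)), (rW m, hH β m)} : Set (ℝ × ℝ)) ∪
    ⋃ j ∈ Finset.Icc 1 (m - 1),
      ({(rW j, hH β j), (rW j, hH β (j + 1))} : Set (ℝ × ℝ))

/-- Radial partial derivative `∂_r`. -/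
def pdr (F : ℝ × ℝ → ℝ) (p : ℝ × ℝ) : ℝ := deriv (fun r => F (r, p.2)) p.1

/-- Vertical partial derivative `∂_{x₃}`. -/
def pdz (F : ℝ × ℝ → ℝ) (p : ℝ × ℝ) : ℝ := deriv (fun z => F (p.1, z)) p.2

/-- The axially symmetric Laplacian `Δ = ∂_r² + (1/r) ∂_r + ∂_{x₃}²`. -/
def cylLap (F : ℝ × ℝ → ℝ) (p : ℝ × ℝ) : ℝ :=
  pdr (pdr F) p + (1 / p.1) * pdr F p + pdz (pdz F) p

/-- The integral of an axially symmetric function over the 3-dimensional domain `D_m`,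
computed in the cross-section: `∫_{D_m} f dx = 2π ∬ F r dr dx₃`. -/
def cylIntegral (β : ℝ) (m : ℕ) (F : ℝ × ℝ → ℝ) : ℝ :=
  ∫ p in Ddom β m, F p * (2 * π * p.1)

/-- The vertical cross-section segment `D_m ∩ {r = c}` of the cross-section. -/
def vertSeg (β : ℝ) (m : ℕ) (c : ℝ) : Set ℝ := {z : ℝ | (c, z) ∈ Ddom β m}

/-!
The equation is `L f + ∂_z² f = ∂_z Ω`, where `L = ∂_r² + (3/r) ∂_r` is the radial operator.
With respect to the weight `r` of the three-dimensional volume, `L` is the radial part of the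
Laplacian plus the drift `(2/r) ∂_r`; tested against `u` the drift gives the exact derivative
`∂_r (u²)`, so `-∫ (L u) u = ∫ (∂_r u)²` as soon as `u = 0` on `∂^V D_m`.

Testing the equation against `f` gives `∫ |∇f|² = ∫ Ω ∂_z f`; testing it against `∂_z² f`, and
moving one vertical derivative in the term `(L f) ∂_z² f`, gives `∫ |∇∂_z f|² = ∫ ∂_z Ω ∂_z² f`.
In both cases Young's inequality concludes.
-/

section PartialDerivatives

variable {F G : ℝ × ℝ → ℝ} {p : ℝ × ℝ} {k : ℝ} {n l : WithTop ℕ∞}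

lemma hasDerivAt_fst_slice (hF : DifferentiableAt ℝ F p) :
    HasDerivAt (fun r => F (r, p.2)) (fderiv ℝ F p (1, 0)) p.1 :=
  (hF.hasFDerivAt : HasFDerivAt F _ (p.1, p.2)).comp_hasDerivAt p.1
    ((hasDerivAt_id p.1).prodMk (hasDerivAt_const p.1 p.2))

lemma hasDerivAt_snd_slice (hF : DifferentiableAt ℝ F p) :
    HasDerivAt (fun z => F (p.1, z)) (fderiv ℝ F p (0, 1)) p.2 :=
  (hF.hasFDerivAt : HasFDerivAt F _ (p.1, p.2)).comp_hasDerivAt p.2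
    ((hasDerivAt_const p.2 p.1).prodMk (hasDerivAt_id p.2))

lemma pdr_eq_fderiv (hF : DifferentiableAt ℝ F p) : pdr F p = fderiv ℝ F p (1, 0) :=
  (hasDerivAt_fst_slice hF).deriv

lemma pdz_eq_fderiv (hF : DifferentiableAt ℝ F p) : pdz F p = fderiv ℝ F p (0, 1) :=
  (hasDerivAt_snd_slice hF).deriv

lemma hasDerivAt_pdr (hF : DifferentiableAt ℝ F p) :
    HasDerivAt (fun r => F (r, p.2)) (pdr F p) p.1 :=
  (hasDerivAt_fst_slice hF).differentiableAt.hasDerivAt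

lemma hasDerivAt_pdz (hF : DifferentiableAt ℝ F p) :
    HasDerivAt (fun z => F (p.1, z)) (pdz F p) p.2 :=
  (hasDerivAt_snd_slice hF).differentiableAt.hasDerivAt

lemma pdr_const (c : ℝ) : pdr (fun _ => c) p = 0 := deriv_const _ _

lemma pdz_const (c : ℝ) : pdz (fun _ => c) p = 0 := deriv_const _ _

lemma pdr_congr_of_eventuallyEq (h : F =ᶠ[nhds p] G) : pdr F p = pdr G p := by
  have hslice : Filter.Tendsto (fun r : ℝ => (r, p.2)) (nhds p.1) (nhds p) :=
    (by fun_prop : Continuous fun r : ℝ => (r, p.2)).tendsto p.1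
  exact (h.comp_tendsto hslice).deriv_eq

lemma eventually_differentiableAt_of_contDiffAt (hF : ContDiffAt ℝ n F p) (hn : 1 ≤ n) :
    ∀ᶠ q in nhds p, DifferentiableAt ℝ F q :=
  ((hF.of_le hn).eventually (by simp)).mono fun _ hq => hq.differentiableAt one_ne_zero

lemma eventuallyEq_pdr_fderiv (hF : ContDiffAt ℝ n F p) (hn : 1 ≤ n) :
    pdr F =ᶠ[nhds p] fun q => fderiv ℝ F q (1, 0) :=
  (eventually_differentiableAt_of_contDiffAt hF hn).mono fun _ hq => pdr_eq_fderiv hq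

lemma eventuallyEq_pdz_fderiv (hF : ContDiffAt ℝ n F p) (hn : 1 ≤ n) :
    pdz F =ᶠ[nhds p] fun q => fderiv ℝ F q (0, 1) :=
  (eventually_differentiableAt_of_contDiffAt hF hn).mono fun _ hq => pdz_eq_fderiv hq

lemma contDiffAt_pdr (hF : ContDiffAt ℝ n F p) (hl : l + 1 ≤ n) : ContDiffAt ℝ l (pdr F) p :=
  ((hF.fderiv_right hl).clm_apply contDiffAt_const).congr_of_eventuallyEq
    (eventuallyEq_pdr_fderiv hF (le_add_self.trans hl))

lemma contDiffAt_pdz (hF : ContDiffAt ℝ n F p) (hl : l + 1 ≤ n) : ContDiffAt ℝ l (pdz F) p :=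
  ((hF.fderiv_right hl).clm_apply contDiffAt_const).congr_of_eventuallyEq
    (eventuallyEq_pdz_fderiv hF (le_add_self.trans hl))

lemma continuousOn_of_contDiffAt {s : Set (ℝ × ℝ)} (hF : ∀ p ∈ s, ContDiffAt ℝ n F p) :
    ContinuousOn F s :=
  fun p hp => (hF p hp).continuousAt.continuousWithinAt

lemma continuousOn_pdr {s : Set (ℝ × ℝ)} (hF : ∀ p ∈ s, ContDiffAt ℝ 1 F p) :
    ContinuousOn (pdr F) s :=
  continuousOn_of_contDiffAt (n := 0) fun p hp => contDiffAt_pdr (hF p hp) (by simp)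

lemma continuousOn_pdz {s : Set (ℝ × ℝ)} (hF : ∀ p ∈ s, ContDiffAt ℝ 1 F p) :
    ContinuousOn (pdz F) s :=
  continuousOn_of_contDiffAt (n := 0) fun p hp => contDiffAt_pdz (hF p hp) (by simp)

lemma pdz_pdr_comm (hF : ContDiffAt ℝ 2 F p) : pdz (pdr F) p = pdr (pdz F) p := by
  have h1 : (1 : WithTop ℕ∞) + 1 ≤ 2 := by norm_num
  have hsymm : IsSymmSndFDerivAt ℝ F p := hF.isSymmSndFDerivAt (by simp)
  have hfderiv : DifferentiableAt ℝ (fderiv ℝ F) p :=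
    (hF.fderiv_right h1).differentiableAt one_ne_zero
  rw [pdz_eq_fderiv ((contDiffAt_pdr hF h1).differentiableAt one_ne_zero),
    pdr_eq_fderiv ((contDiffAt_pdz hF h1).differentiableAt one_ne_zero),
    (eventuallyEq_pdr_fderiv hF (by norm_num)).fderiv_eq,
    (eventuallyEq_pdz_fderiv hF (by norm_num)).fderiv_eq,
    fderiv_clm_apply hfderiv (by fun_prop), fderiv_clm_apply hfderiv (by fun_prop)]
  simpa using hsymm (0, 1) (1, 0)

/-- The radial operator `∂_r² + (k/r) ∂_r`, for real `k`: for a natural number `k` it is the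
Laplacian of radial functions on `ℝ^(k+1)`. The equation of the main theorem has `k = 3`. -/
def radLap (k : ℝ) (F : ℝ × ℝ → ℝ) (p : ℝ × ℝ) : ℝ :=
  pdr (pdr F) p + (k / p.1) * pdr F p

lemma contDiffAt_radLap (hF : ContDiffAt ℝ n F p) (hl : l + 1 + 1 ≤ n) (hp : p.1 ≠ 0) :
    ContDiffAt ℝ l (radLap k F) p :=
  have hFr : ContDiffAt ℝ (l + 1) (pdr F) p := contDiffAt_pdr hF hl
  (contDiffAt_pdr hFr le_rfl).add
    ((contDiffAt_const.div contDiffAt_fst hp).mul (hFr.of_le le_self_add))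

lemma pdz_radLap (hF : ContDiffAt ℝ 3 F p) : pdz (radLap k F) p = radLap k (pdz F) p := by
  have hFr : ContDiffAt ℝ 2 (pdr F) p := contDiffAt_pdr hF (by norm_num)
  have hFrr : ContDiffAt ℝ 1 (pdr (pdr F)) p := contDiffAt_pdr hFr (by norm_num)
  have hF2 : ContDiffAt ℝ 2 F p := hF.of_le (by norm_num)
  have hcomm : pdz (pdr F) =ᶠ[nhds p] pdr (pdz F) :=
    (hF2.eventually (by simp)).mono fun _ hq => pdz_pdr_comm hq
  calc pdz (radLap k F) p = pdz (pdr (pdr F)) p + k / p.1 * pdz (pdr F) p :=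
        ((hasDerivAt_pdz (hFrr.differentiableAt one_ne_zero)).add
          ((hasDerivAt_pdz (hFr.differentiableAt two_ne_zero)).const_mul (k / p.1))).deriv
    _ = radLap k (pdz F) p := by
        rw [pdz_pdr_comm hFr, pdr_congr_of_eventuallyEq hcomm, pdz_pdr_comm hF2, radLap]

lemma integral_Icc_pdr_add_pdz {P Q : ℝ × ℝ → ℝ} {a b : ℝ × ℝ} (hab : a ≤ b)
    (hP : ∀ p ∈ Icc a b, ContDiffAt ℝ 1 P p) (hQ : ∀ p ∈ Icc a b, ContDiffAt ℝ 1 Q p) :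
    ∫ p in Icc a b, (pdr P p + pdz Q p) =
      (∫ r in a.1..b.1, Q (r, b.2)) - (∫ r in a.1..b.1, Q (r, a.2)) +
        (∫ z in a.2..b.2, P (b.1, z)) - ∫ z in a.2..b.2, P (a.1, z) := by
  have hdP : ∀ p ∈ Icc a b, DifferentiableAt ℝ P p :=
    fun p hp => (hP p hp).differentiableAt one_ne_zero
  have hdQ : ∀ p ∈ Icc a b, DifferentiableAt ℝ Q p :=
    fun p hp => (hQ p hp).differentiableAt one_ne_zero
  have hdiv : EqOn (fun p => pdr P p + pdz Q p)
      (fun p => fderiv ℝ P p (1, 0) + fderiv ℝ Q p (0, 1)) (Icc a b) :=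
    fun p hp => congrArg₂ (· + ·) (pdr_eq_fderiv (hdP p hp)) (pdz_eq_fderiv (hdQ p hp))
  have hcont : ContinuousOn (fun p => pdr P p + pdz Q p) (Icc a b) :=
    (continuousOn_pdr hP).add (continuousOn_pdz hQ)
  have hsub : Ioo a.1 b.1 ×ˢ Ioo a.2 b.2 ⊆ Icc a b := by
    rw [← Prod.mk.eta (p := a), ← Prod.mk.eta (p := b), ← Icc_prod_Icc]
    exact prod_mono Ioo_subset_Icc_self Ioo_subset_Icc_self
  rw [setIntegral_congr_fun measurableSet_Icc hdiv]
  exact integral_divergence_prod_Icc_of_hasFDerivAt_of_le P Q _ _ a b hab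
    (continuousOn_of_contDiffAt hP) (continuousOn_of_contDiffAt hQ)
    (fun p hp => (hdP p (hsub hp)).hasFDerivAt) (fun p hp => (hdQ p (hsub hp)).hasFDerivAt)
    ((hcont.congr fun p hp => (hdiv hp).symm).integrableOn_compact isCompact_Icc)

end PartialDerivatives

section Domain

variable {β : ℝ} {m i : ℕ} {p : ℝ × ℝ}

lemma rW_zero : rW 0 = 1 := by simp [rW]

lemma rW_pos (j : ℕ) : 0 < rW j := rpow_pos_of_pos two_pos _

lemma rW_strictAnti : StrictAnti rW := fun _ _ h =>
  rpow_lt_rpow_of_exponent_lt one_lt_two (neg_lt_neg (Nat.cast_lt.2 h))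

lemma hH_one (β : ℝ) : hH β 1 = 1 := by simp [hH]

lemma hH_pos (β : ℝ) (j : ℕ) : 0 < hH β j := rpow_pos_of_pos two_pos _

lemma hH_antitone (hβ : 0 ≤ β) : Antitone (hH β) := fun i j h => by
  have hij : (i : ℝ) ≤ j := Nat.cast_le.2 h
  exact rpow_le_rpow_of_exponent_le one_le_two (by nlinarith)

lemma Srect_succ (β : ℝ) (i : ℕ) :
    Srect β (i + 1) = Ico (rW (i + 1)) (rW i) ×ˢ Ioo 0 (hH β (i + 1)) := by
  ext p
  simp only [Srect, Nat.add_sub_cancel, mem_ofPred_eq, mem_prod, mem_Ico, mem_Ioo, and_assoc]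

lemma measurableSet_Srect_succ (β : ℝ) (i : ℕ) : MeasurableSet (Srect β (i + 1)) := by
  rw [Srect_succ]
  exact measurableSet_Ico.prod measurableSet_Ioo

lemma closure_Srect_succ (β : ℝ) (i : ℕ) :
    closure (Srect β (i + 1)) = Icc (rW (i + 1), 0) (rW i, hH β (i + 1)) := by
  rw [Srect_succ, closure_prod_eq, closure_Ico (rW_strictAnti i.lt_succ_self).ne,
    closure_Ioo (hH_pos β _).ne, Icc_prod_Icc]

lemma Srect_succ_ae_eq_closure (β : ℝ) (i : ℕ) :
    Srect β (i + 1) =ᵐ[volume] closure (Srect β (i + 1)) := by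
  rw [closure_Srect_succ, ← Icc_prod_Icc, Srect_succ]
  exact Measure.set_prod_ae_eq Ico_ae_eq_Icc Ioo_ae_eq_Icc

lemma pairwise_disjoint_Srect_succ (β : ℝ) :
    Pairwise (Function.onFun Disjoint fun i => Srect β (i + 1)) := fun i j hij => by
  simp only [Function.onFun, Srect_succ]
  exact (rW_strictAnti.antitone.pairwise_disjoint_on_Ico_succ hij).set_prod_left _ _

lemma Ddom_eq_biUnion_range (β : ℝ) (m : ℕ) :
    Ddom β m = ⋃ i ∈ Finset.range m, Srect β (i + 1) := by
  ext p
  simp only [Ddom, mem_iUnion, Finset.mem_Icc, Finset.mem_range, exists_prop]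
  constructor
  · rintro ⟨j, ⟨h1, hm⟩, hp⟩
    exact ⟨j - 1, by omega, by rwa [Nat.sub_add_cancel h1]⟩
  · rintro ⟨i, hi, hp⟩
    exact ⟨i + 1, ⟨by omega, hi⟩, hp⟩

lemma Srect_succ_subset_Ddom (hi : i < m) : Srect β (i + 1) ⊆ Ddom β m := by
  rw [Ddom_eq_biUnion_range]
  exact subset_biUnion_of_mem (u := fun i => Srect β (i + 1)) (Finset.mem_range.2 hi)

lemma Icc_subset_closure_Ddom (hi : i < m) :
    Icc (rW (i + 1), 0) (rW i, hH β (i + 1)) ⊆ closure (Ddom β m) :=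
  closure_Srect_succ β i ▸ closure_mono (Srect_succ_subset_Ddom hi)

lemma measurableSet_Ddom (β : ℝ) (m : ℕ) : MeasurableSet (Ddom β m) := by
  rw [Ddom_eq_biUnion_range]
  exact Finset.measurableSet_biUnion _ fun i _ => measurableSet_Srect_succ β i

lemma isBounded_Ddom (β : ℝ) (m : ℕ) : Bornology.IsBounded (Ddom β m) := by
  rw [Ddom_eq_biUnion_range, Bornology.isBounded_biUnion_finset]
  intro i _
  rw [Srect_succ]
  exact (Metric.isBounded_Ico _ _).prod (Metric.isBounded_Ioo _ _)

lemma fst_pos_of_mem_closure_Ddom (hp : p ∈ closure (Ddom β m)) : 0 < p.1 := by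
  have hsub : Ddom β m ⊆ {q | rW m ≤ q.1} := by
    simp only [Ddom, iUnion_subset_iff, Finset.mem_Icc]
    exact fun j hj q hq => (rW_strictAnti.antitone hj.2).trans hq.1
  exact (rW_pos m).trans_le
    (closure_minimal hsub (isClosed_le continuous_const continuous_fst) hp)

lemma bottom_mem_bdH (hi : i < m) {r : ℝ} (hr : r ∈ Icc (rW (i + 1)) (rW i)) :
    (r, 0) ∈ bdH β m :=
  Or.inl ⟨rfl, (rW_strictAnti.antitone hi).trans hr.1,
    hr.2.trans (rW_zero ▸ rW_strictAnti.antitone i.zero_le)⟩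

lemma top_mem_bdH (hi : i < m) {r : ℝ} (hr : r ∈ Icc (rW (i + 1)) (rW i)) :
    (r, hH β (i + 1)) ∈ bdH β m :=
  Or.inr (mem_biUnion (Finset.mem_Icc.2 ⟨i.succ_pos, hi⟩) ⟨rfl, hr⟩)

lemma outer_side_mem_bdV {z : ℝ} (hz : z ∈ Icc 0 (hH β 1)) : (rW 0, z) ∈ bdV β m :=
  Or.inl (Or.inl ⟨rW_zero, hz.1, hH_one β ▸ hz.2⟩)

lemma inner_side_mem_bdV {z : ℝ} (hz : z ∈ Icc 0 (hH β m)) : (rW m, z) ∈ bdV β m :=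
  Or.inl (Or.inr ⟨rfl, hz⟩)

lemma step_mem_bdV (hi : i < m) {z : ℝ} (hz : z ∈ Icc (hH β (i + 2)) (hH β (i + 1))) :
    (rW (i + 1), z) ∈ bdV β m := by
  rcases Nat.lt_or_ge (i + 1) m with hlt | hge
  · exact Or.inr (mem_biUnion (Finset.mem_Icc.2 ⟨by omega, by omega⟩) ⟨rfl, hz⟩)
  · obtain rfl : m = i + 1 := by omega
    exact inner_side_mem_bdV ⟨(hH_pos β _).le.trans hz.1, hz.2⟩

end Domain

section Divergence

variable {β : ℝ} {m i : ℕ} {F P Q : ℝ × ℝ → ℝ}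

lemma integrableOn_Ddom_of_continuousOn (hF : ContinuousOn F (closure (Ddom β m))) :
    IntegrableOn F (Ddom β m) :=
  (hF.integrableOn_compact (isBounded_Ddom β m).isCompact_closure).mono_set subset_closure

lemma integral_Ddom_eq_sum (hF : IntegrableOn F (Ddom β m)) :
    ∫ p in Ddom β m, F p = ∑ i ∈ Finset.range m, ∫ p in Srect β (i + 1), F p := by
  rw [Ddom_eq_biUnion_range]
  exact integral_biUnion_finset _ (fun i _ => measurableSet_Srect_succ β i)
    ((pairwise_disjoint_Srect_succ β).set_pairwise _)
    fun i hi => hF.mono_set (Srect_succ_subset_Ddom (Finset.mem_range.1 hi))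

lemma integral_Srect_pdr (hi : i < m) (hP : ∀ p ∈ closure (Ddom β m), ContDiffAt ℝ 1 P p) :
    ∫ p in Srect β (i + 1), pdr P p =
      (∫ z in 0..hH β (i + 1), P (rW i, z)) - ∫ z in 0..hH β (i + 1), P (rW (i + 1), z) := by
  have hab : (rW (i + 1), (0 : ℝ)) ≤ (rW i, hH β (i + 1)) :=
    ⟨rW_strictAnti.antitone i.le_succ, (hH_pos β _).le⟩
  rw [setIntegral_congr_set (Srect_succ_ae_eq_closure β i), closure_Srect_succ]
  simpa [pdz_const] using integral_Icc_pdr_add_pdz (Q := fun _ => 0) hab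
    (fun p hp => hP p (Icc_subset_closure_Ddom hi hp)) fun _ _ => contDiffAt_const

lemma integral_Srect_pdz_eq_zero (hi : i < m)
    (hQ : ∀ p ∈ closure (Ddom β m), ContDiffAt ℝ 1 Q p) (hQH : ∀ p ∈ bdH β m, Q p = 0) :
    ∫ p in Srect β (i + 1), pdz Q p = 0 := by
  have hr : rW (i + 1) ≤ rW i := rW_strictAnti.antitone i.le_succ
  have htop : ∫ r in rW (i + 1)..rW i, Q (r, hH β (i + 1)) = 0 :=
    intervalIntegral.integral_zero_ae (.of_forall fun r hrI =>
      hQH _ (top_mem_bdH hi (uIcc_of_le hr ▸ uIoc_subset_uIcc hrI)))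
  have hbottom : ∫ r in rW (i + 1)..rW i, Q (r, 0) = 0 :=
    intervalIntegral.integral_zero_ae (.of_forall fun r hrI =>
      hQH _ (bottom_mem_bdH hi (uIcc_of_le hr ▸ uIoc_subset_uIcc hrI)))
  rw [setIntegral_congr_set (Srect_succ_ae_eq_closure β i), closure_Srect_succ]
  simpa [pdr_const, htop, hbottom] using integral_Icc_pdr_add_pdz (P := fun _ => 0)
    ⟨hr, (hH_pos β _).le⟩ (fun _ _ => contDiffAt_const)
    fun p hp => hQ p (Icc_subset_closure_Ddom hi hp)

theorem integral_Ddom_pdz_eq_zero (hQ : ∀ p ∈ closure (Ddom β m), ContDiffAt ℝ 1 Q p)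
    (hQH : ∀ p ∈ bdH β m, Q p = 0) : ∫ p in Ddom β m, pdz Q p = 0 := by
  rw [integral_Ddom_eq_sum (integrableOn_Ddom_of_continuousOn (continuousOn_pdz hQ))]
  exact Finset.sum_eq_zero fun i hi =>
    integral_Srect_pdz_eq_zero (Finset.mem_range.1 hi) hQ hQH

lemma integral_left_side_eq (hβ : 0 ≤ β) (hi : i < m)
    (hP : ContinuousOn P (closure (Ddom β m))) (hPV : ∀ p ∈ bdV β m, P p = 0) :
    ∫ z in 0..hH β (i + 1), P (rW (i + 1), z) = ∫ z in 0..hH β (i + 2), P (rW (i + 1), z) := by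
  have hh : hH β (i + 2) ≤ hH β (i + 1) := hH_antitone hβ (i + 1).le_succ
  have hmem : hH β (i + 2) ∈ Icc 0 (hH β (i + 1)) := ⟨(hH_pos β _).le, hh⟩
  have hcont : ContinuousOn (fun z => P (rW (i + 1), z)) (Icc 0 (hH β (i + 1))) :=
    hP.comp (by fun_prop) fun z hz => Icc_subset_closure_Ddom hi
      ⟨⟨le_rfl, hz.1⟩, ⟨rW_strictAnti.antitone i.le_succ, hz.2⟩⟩
  have hstep : ∫ z in hH β (i + 2)..hH β (i + 1), P (rW (i + 1), z) = 0 :=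
    intervalIntegral.integral_zero_ae (.of_forall fun z hz =>
      hPV _ (step_mem_bdV hi (uIcc_of_le hh ▸ uIoc_subset_uIcc hz)))
  rw [← intervalIntegral.integral_add_adjacent_intervals (b := hH β (i + 2)), hstep, add_zero]
  · exact (hcont.mono (Icc_subset_Icc_right hh)).intervalIntegrable_of_Icc hmem.1
  · exact (hcont.mono (Icc_subset_Icc_left hmem.1)).intervalIntegrable_of_Icc hh

theorem integral_Ddom_pdr_eq_zero (hβ : 0 ≤ β)
    (hP : ∀ p ∈ closure (Ddom β m), ContDiffAt ℝ 1 P p) (hPV : ∀ p ∈ bdV β m, P p = 0) :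
    ∫ p in Ddom β m, pdr P p = 0 := by
  -- Above height `hH β (i + 1)` the line `{r = rW i}` meets the closure only in `∂^V D_m`.
  let flux : ℕ → ℝ := fun i => ∫ z in 0..hH β (i + 1), P (rW i, z)
  have hflux_outer : flux 0 = 0 :=
    intervalIntegral.integral_zero_ae (.of_forall fun z hz =>
      hPV _ (outer_side_mem_bdV (uIcc_of_le (hH_pos β 1).le ▸ uIoc_subset_uIcc hz)))
  have hflux_inner : flux m = 0 :=
    intervalIntegral.integral_zero_ae (.of_forall fun z hz => by
      rw [uIoc_of_le (hH_pos β _).le] at hz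
      exact hPV _ (inner_side_mem_bdV ⟨hz.1.le, hz.2.trans (hH_antitone hβ m.le_succ)⟩))
  calc ∫ p in Ddom β m, pdr P p
      = ∑ i ∈ Finset.range m, ∫ p in Srect β (i + 1), pdr P p :=
        integral_Ddom_eq_sum (integrableOn_Ddom_of_continuousOn (continuousOn_pdr hP))
    _ = ∑ i ∈ Finset.range m, (flux i - flux (i + 1)) :=
        Finset.sum_congr rfl fun i hi => by
          rw [integral_Srect_pdr (Finset.mem_range.1 hi) hP,
            integral_left_side_eq hβ (Finset.mem_range.1 hi) (continuousOn_of_contDiffAt hP) hPV]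
    _ = 0 := by rw [Finset.sum_range_sub', hflux_outer, hflux_inner, sub_zero]

end Divergence

section CylIntegral

variable {β : ℝ} {m : ℕ} {F G A B C : ℝ × ℝ → ℝ}

lemma integrableOn_mul_weight (hF : ContinuousOn F (closure (Ddom β m))) :
    IntegrableOn (fun p => F p * (2 * π * p.1)) (Ddom β m) :=
  integrableOn_Ddom_of_continuousOn (hF.mul (by fun_prop))

lemma cylIntegral_congr (h : ∀ p ∈ Ddom β m, F p = G p) :
    cylIntegral β m F = cylIntegral β m G :=
  setIntegral_congr_fun (measurableSet_Ddom β m) fun p hp => by rw [h p hp]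

lemma cylIntegral_add (hF : ContinuousOn F (closure (Ddom β m)))
    (hG : ContinuousOn G (closure (Ddom β m))) :
    cylIntegral β m (fun p => F p + G p) = cylIntegral β m F + cylIntegral β m G := by
  simp only [cylIntegral, add_mul]
  exact integral_add (integrableOn_mul_weight hF) (integrableOn_mul_weight hG)

lemma cylIntegral_nonneg (h : ∀ p ∈ Ddom β m, 0 ≤ F p) : 0 ≤ cylIntegral β m F :=
  setIntegral_nonneg (measurableSet_Ddom β m) fun p hp =>
    mul_nonneg (h p hp) (mul_nonneg two_pi_pos.le
      (fst_pos_of_mem_closure_Ddom (subset_closure hp)).le)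

lemma cylIntegral_mono (hF : ContinuousOn F (closure (Ddom β m)))
    (hG : ContinuousOn G (closure (Ddom β m))) (h : ∀ p ∈ Ddom β m, F p ≤ G p) :
    cylIntegral β m F ≤ cylIntegral β m G :=
  setIntegral_mono_on (integrableOn_mul_weight hF) (integrableOn_mul_weight hG)
    (measurableSet_Ddom β m) fun p hp => mul_le_mul_of_nonneg_right (h p hp)
      (mul_nonneg two_pi_pos.le (fst_pos_of_mem_closure_Ddom (subset_closure hp)).le)

lemma cylIntegral_sq_add_sq_le (hA : ContinuousOn A (closure (Ddom β m)))
    (hB : ContinuousOn B (closure (Ddom β m))) (hC : ContinuousOn C (closure (Ddom β m)))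
    (h : cylIntegral β m (fun p => A p ^ 2 + B p ^ 2) = cylIntegral β m (fun p => C p * B p)) :
    cylIntegral β m (fun p => A p ^ 2 + B p ^ 2) ≤ cylIntegral β m (fun p => C p ^ 2) := by
  have hE : ContinuousOn (fun p => A p ^ 2 + B p ^ 2) (closure (Ddom β m)) := by fun_prop
  have hC2 : ContinuousOn (fun p => C p ^ 2) (closure (Ddom β m)) := by fun_prop
  have hCB : ContinuousOn (fun p => C p * B p) (closure (Ddom β m)) := by fun_prop
  have young : cylIntegral β m (fun p => C p * B p + C p * B p) ≤
      cylIntegral β m (fun p => C p ^ 2 + (A p ^ 2 + B p ^ 2)) :=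
    cylIntegral_mono (hCB.add hCB) (hC2.add hE) fun p _ => by
      nlinarith [sq_nonneg (C p - B p), sq_nonneg (A p)]
  rw [cylIntegral_add hCB hCB, cylIntegral_add hC2 hE] at young
  linarith

lemma cylIntegral_eq_zero_of_mul_fst_eq (h : ∀ p ∈ Ddom β m, F p * p.1 = G p)
    (hG : ∫ p in Ddom β m, G p = 0) : cylIntegral β m F = 0 := by
  calc cylIntegral β m F = ∫ p in Ddom β m, 2 * π * G p :=
        setIntegral_congr_fun (measurableSet_Ddom β m) fun p hp => by
          rw [← h p hp]; ring
    _ = 0 := by rw [integral_const_mul, hG, mul_zero]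

end CylIntegral

section Energy

variable {β k : ℝ} {m : ℕ} {f u v Ω : ℝ × ℝ → ℝ}

lemma continuousOn_radLap (hu : ∀ p ∈ closure (Ddom β m), ContDiffAt ℝ 2 u p) :
    ContinuousOn (radLap k u) (closure (Ddom β m)) :=
  continuousOn_of_contDiffAt (n := 0) fun p hp =>
    contDiffAt_radLap (hu p hp) (by norm_num) (fst_pos_of_mem_closure_Ddom hp).ne'

lemma cylIntegral_radLap_mul_add_cylIntegral_pdz_pdz_mul
    (hf : ∀ p ∈ closure (Ddom β m), ContDiffAt ℝ 2 f p) (hv : ContinuousOn v (closure (Ddom β m)))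
    (heq : ∀ p ∈ Ddom β m, radLap k f p + pdz (pdz f) p = pdz Ω p) :
    cylIntegral β m (fun p => radLap k f p * v p) +
        cylIntegral β m (fun p => pdz (pdz f) p * v p) =
      cylIntegral β m (fun p => pdz Ω p * v p) := by
  have hfzz : ContinuousOn (pdz (pdz f)) (closure (Ddom β m)) :=
    continuousOn_pdz fun p hp => contDiffAt_pdz (hf p hp) (by norm_num)
  rw [← cylIntegral_add ((continuousOn_radLap hf).fun_mul hv) (hfzz.fun_mul hv)]
  exact cylIntegral_congr fun p hp => by rw [← heq p hp, add_mul]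

theorem cylIntegral_pdz_mul (hu : ∀ p ∈ closure (Ddom β m), ContDiffAt ℝ 1 u p)
    (hv : ∀ p ∈ closure (Ddom β m), ContDiffAt ℝ 1 v p) (huv : ∀ p ∈ bdH β m, u p * v p = 0) :
    cylIntegral β m (fun p => pdz u p * v p) = -cylIntegral β m (fun p => u p * pdz v p) := by
  have huz : ContinuousOn (fun p => pdz u p * v p) (closure (Ddom β m)) :=
    (continuousOn_pdz hu).mul (continuousOn_of_contDiffAt hv)
  have hvz : ContinuousOn (fun p => u p * pdz v p) (closure (Ddom β m)) :=
    (continuousOn_of_contDiffAt hu).mul (continuousOn_pdz hv)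
  rw [eq_neg_iff_add_eq_zero, ← cylIntegral_add huz hvz]
  refine cylIntegral_eq_zero_of_mul_fst_eq (G := pdz fun p => u p * v p * p.1) (fun p hp => ?_)
    (integral_Ddom_pdz_eq_zero (fun p hp => ((hu p hp).mul (hv p hp)).mul contDiffAt_fst)
      fun p hp => by rw [huv p hp, zero_mul])
  have hdu := hasDerivAt_pdz ((hu p (subset_closure hp)).differentiableAt one_ne_zero)
  have hdv := hasDerivAt_pdz ((hv p (subset_closure hp)).differentiableAt one_ne_zero)
  exact ((hdu.mul hdv).mul_const p.1).deriv.symm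

theorem cylIntegral_radLap_mul_self (hβ : 0 ≤ β)
    (hu : ∀ p ∈ closure (Ddom β m), ContDiffAt ℝ 2 u p) (huV : ∀ p ∈ bdV β m, u p = 0) :
    cylIntegral β m (fun p => radLap k u p * u p) = -cylIntegral β m (fun p => pdr u p ^ 2) := by
  have hur : ∀ p ∈ closure (Ddom β m), ContDiffAt ℝ 1 (pdr u) p :=
    fun p hp => contDiffAt_pdr (hu p hp) (by norm_num)
  have hu1 : ∀ p ∈ closure (Ddom β m), ContDiffAt ℝ 1 u p :=
    fun p hp => (hu p hp).of_le (by norm_num)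
  have hLu : ContinuousOn (fun p => radLap k u p * u p) (closure (Ddom β m)) :=
    (continuousOn_radLap hu).mul (continuousOn_of_contDiffAt hu)
  have hur2 : ContinuousOn (fun p => pdr u p ^ 2) (closure (Ddom β m)) :=
    (continuousOn_of_contDiffAt hur).pow 2
  rw [eq_neg_iff_add_eq_zero, ← cylIntegral_add hLu hur2]
  refine cylIntegral_eq_zero_of_mul_fst_eq
    (G := pdr fun p => p.1 * (pdr u p * u p) + (k - 1) / 2 * u p ^ 2) (fun p hp => ?_)
    (integral_Ddom_pdr_eq_zero hβ
      (fun p hp => (contDiffAt_fst.mul ((hur p hp).mul (hu1 p hp))).add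
        (contDiffAt_const.mul ((hu1 p hp).pow 2)))
      fun p hp => by simp [huV p hp])
  have hp0 : p.1 ≠ 0 := (fst_pos_of_mem_closure_Ddom (subset_closure hp)).ne'
  have hdu := hasDerivAt_pdr ((hu1 p (subset_closure hp)).differentiableAt one_ne_zero)
  have hdur := hasDerivAt_pdr ((hur p (subset_closure hp)).differentiableAt one_ne_zero)
  have hPr : pdr (fun p => p.1 * (pdr u p * u p) + (k - 1) / 2 * u p ^ 2) p =
      1 * (pdr u p * u p) + p.1 * (pdr (pdr u) p * u p + pdr u p * pdr u p) +
        (k - 1) / 2 * ((2 : ℕ) * u p ^ (2 - 1) * pdr u p) :=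
    (((hasDerivAt_id p.1).mul (hdur.mul hdu)).add ((hdu.pow 2).const_mul _)).deriv
  rw [hPr, radLap]
  field_simp
  ring

theorem cylIntegral_grad_sq_le (hβ : 0 ≤ β)
    (hf : ∀ p ∈ closure (Ddom β m), ContDiffAt ℝ 2 f p)
    (hΩ : ∀ p ∈ closure (Ddom β m), ContDiffAt ℝ 1 Ω p)
    (heq : ∀ p ∈ Ddom β m, radLap k f p + pdz (pdz f) p = pdz Ω p)
    (hfV : ∀ p ∈ bdV β m, f p = 0) (hfzH : ∀ p ∈ bdH β m, pdz f p = 0)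
    (hΩH : ∀ p ∈ bdH β m, Ω p = 0) :
    cylIntegral β m (fun p => pdr f p ^ 2 + pdz f p ^ 2) ≤ cylIntegral β m (fun p => Ω p ^ 2) := by
  have hf1 : ∀ p ∈ closure (Ddom β m), ContDiffAt ℝ 1 f p :=
    fun p hp => (hf p hp).of_le (by norm_num)
  have hfz : ∀ p ∈ closure (Ddom β m), ContDiffAt ℝ 1 (pdz f) p :=
    fun p hp => contDiffAt_pdz (hf p hp) (by norm_num)
  refine cylIntegral_sq_add_sq_le (continuousOn_pdr hf1) (continuousOn_pdz hf1)
    (continuousOn_of_contDiffAt hΩ) ?_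
  calc cylIntegral β m (fun p => pdr f p ^ 2 + pdz f p ^ 2)
      = cylIntegral β m (fun p => pdr f p ^ 2) + cylIntegral β m (fun p => pdz f p * pdz f p) := by
        simp only [← sq]
        exact cylIntegral_add ((continuousOn_pdr hf1).pow 2) ((continuousOn_pdz hf1).pow 2)
    _ = -(cylIntegral β m (fun p => radLap k f p * f p) +
          cylIntegral β m (fun p => pdz (pdz f) p * f p)) := by
        rw [cylIntegral_radLap_mul_self hβ hf hfV,
          cylIntegral_pdz_mul hfz hf1 fun p hp => by rw [hfzH p hp, zero_mul]]
        ring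
    _ = -cylIntegral β m (fun p => pdz Ω p * f p) := by
        rw [cylIntegral_radLap_mul_add_cylIntegral_pdz_pdz_mul hf
          (continuousOn_of_contDiffAt hf1) heq]
    _ = cylIntegral β m (fun p => Ω p * pdz f p) := by
        rw [cylIntegral_pdz_mul hΩ hf1 fun p hp => by rw [hΩH p hp, zero_mul], neg_neg]

theorem cylIntegral_grad_pdz_sq_le (hβ : 0 ≤ β)
    (hf : ∀ p ∈ closure (Ddom β m), ContDiffAt ℝ 3 f p)
    (hΩ : ∀ p ∈ closure (Ddom β m), ContDiffAt ℝ 1 Ω p)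
    (heq : ∀ p ∈ Ddom β m, radLap k f p + pdz (pdz f) p = pdz Ω p)
    (hfz0 : ∀ p ∈ bdH β m ∪ bdV β m, pdz f p = 0) :
    cylIntegral β m (fun p => pdr (pdz f) p ^ 2 + pdz (pdz f) p ^ 2) ≤
      cylIntegral β m (fun p => pdz Ω p ^ 2) := by
  have hfz : ∀ p ∈ closure (Ddom β m), ContDiffAt ℝ 2 (pdz f) p :=
    fun p hp => contDiffAt_pdz (hf p hp) (by norm_num)
  have hfz1 : ∀ p ∈ closure (Ddom β m), ContDiffAt ℝ 1 (pdz f) p :=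
    fun p hp => (hfz p hp).of_le (by norm_num)
  have hLf : ∀ p ∈ closure (Ddom β m), ContDiffAt ℝ 1 (radLap k f) p := fun p hp =>
    contDiffAt_radLap (hf p hp) (by norm_num) (fst_pos_of_mem_closure_Ddom hp).ne'
  refine cylIntegral_sq_add_sq_le (continuousOn_pdr hfz1) (continuousOn_pdz hfz1)
    (continuousOn_pdz hΩ) ?_
  calc cylIntegral β m (fun p => pdr (pdz f) p ^ 2 + pdz (pdz f) p ^ 2)
      = cylIntegral β m (fun p => pdr (pdz f) p ^ 2) +
          cylIntegral β m (fun p => pdz (pdz f) p * pdz (pdz f) p) := by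
        simp only [← sq]
        exact cylIntegral_add ((continuousOn_pdr hfz1).pow 2) ((continuousOn_pdz hfz1).pow 2)
    _ = -cylIntegral β m (fun p => radLap k (pdz f) p * pdz f p) +
          cylIntegral β m (fun p => pdz (pdz f) p * pdz (pdz f) p) := by
        rw [cylIntegral_radLap_mul_self hβ hfz fun p hp => hfz0 p (Or.inr hp), neg_neg]
    _ = -cylIntegral β m (fun p => pdz (radLap k f) p * pdz f p) +
          cylIntegral β m (fun p => pdz (pdz f) p * pdz (pdz f) p) := by
        rw [cylIntegral_congr fun p hp => by rw [← pdz_radLap (hf p (subset_closure hp))]]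
    _ = cylIntegral β m (fun p => radLap k f p * pdz (pdz f) p) +
          cylIntegral β m (fun p => pdz (pdz f) p * pdz (pdz f) p) := by
        rw [cylIntegral_pdz_mul hLf hfz1 fun p hp => by rw [hfz0 p (Or.inl hp), mul_zero],
          neg_neg]
    _ = cylIntegral β m (fun p => pdz Ω p * pdz (pdz f) p) :=
        cylIntegral_radLap_mul_add_cylIntegral_pdz_pdz_mul
          (fun p hp => (hf p hp).of_le (by norm_num)) (continuousOn_pdz hfz1) heq

end Energy

theorem grad_bounds_from_Omega_general {β : ℝ} (hβ : 0 ≤ β) (m : ℕ) (k : ℝ) {f Ω : ℝ × ℝ → ℝ}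
    (hf : ∃ U : Set (ℝ × ℝ), IsOpen U ∧ closure (Ddom β m) ⊆ U ∧ ContDiffOn ℝ 3 f U)
    (hΩ : ∃ U : Set (ℝ × ℝ), IsOpen U ∧ closure (Ddom β m) ⊆ U ∧ ContDiffOn ℝ 1 Ω U)
    (heq : ∀ p ∈ Ddom β m,
      pdr (pdr f) p + (k / p.1) * pdr f p + pdz (pdz f) p = pdz Ω p)
    (hfV : ∀ p ∈ bdV β m, f p = 0)
    (hfz : ∀ p ∈ bdH β m ∪ bdV β m, pdz f p = 0)
    (hΩH : ∀ p ∈ bdH β m, Ω p = 0) :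
    (cylIntegral β m fun p => (pdr f p) ^ 2 + (pdz f p) ^ 2) ^ ((1 : ℝ) / 2) ≤
        (cylIntegral β m fun p => (Ω p) ^ 2) ^ ((1 : ℝ) / 2) ∧
      (cylIntegral β m fun p => (pdr (pdz f) p) ^ 2 + (pdz (pdz f) p) ^ 2) ^ ((1 : ℝ) / 2) ≤
        (cylIntegral β m fun p => (pdz Ω p) ^ 2) ^ ((1 : ℝ) / 2) := by
  obtain ⟨U, hU, hDU, hfU⟩ := hf
  obtain ⟨V, hV, hDV, hΩV⟩ := hΩ
  have hf3 : ∀ p ∈ closure (Ddom β m), ContDiffAt ℝ 3 f p :=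
    fun p hp => hfU.contDiffAt (hU.mem_nhds (hDU hp))
  have hf2 : ∀ p ∈ closure (Ddom β m), ContDiffAt ℝ 2 f p :=
    fun p hp => (hf3 p hp).of_le (by norm_num)
  have hΩ1 : ∀ p ∈ closure (Ddom β m), ContDiffAt ℝ 1 Ω p :=
    fun p hp => hΩV.contDiffAt (hV.mem_nhds (hDV hp))
  have hgrad := cylIntegral_grad_sq_le hβ hf2 hΩ1 heq hfV (fun p hp => hfz p (Or.inl hp)) hΩH
  have hgradz := cylIntegral_grad_pdz_sq_le hβ hf3 hΩ1 heq hfz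
  exact ⟨rpow_le_rpow (cylIntegral_nonneg fun _ _ => by positivity) hgrad (by norm_num),
    rpow_le_rpow (cylIntegral_nonneg fun _ _ => by positivity) hgradz (by norm_num)⟩

/-- Gradient bounds for the solution `f` of the elliptic equation
`∂_r² f + (3/r) ∂_r f + ∂_{x₃}² f = ∂_{x₃} Ω` with the stated boundary conditions. -/
theorem grad_bounds_from_Omega (β : ℝ) (hβ : 1 < β) (hβ' : β ≤ 1.1)
    (m : ℕ) (hm : 1 ≤ m) (f Ω : ℝ × ℝ → ℝ)
    (hf : ∃ U : Set (ℝ × ℝ), IsOpen U ∧ closure (Ddom β m) ⊆ U ∧ ContDiffOn ℝ 3 f U)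
    (hΩ : ∃ U : Set (ℝ × ℝ), IsOpen U ∧ closure (Ddom β m) ⊆ U ∧ ContDiffOn ℝ 1 Ω U)
    (heq : ∀ p ∈ Ddom β m,
      pdr (pdr f) p + (3 / p.1) * pdr f p + pdz (pdz f) p = pdz Ω p)
    (hfV : ∀ p ∈ bdV β m, f p = 0)
    (hfz : ∀ p ∈ bdH β m ∪ bdV β m, pdz f p = 0)
    (hΩ0 : ∀ p ∈ bdD β m, Ω p = 0) :
    (cylIntegral β m fun p => (pdr f p) ^ 2 + (pdz f p) ^ 2) ^ ((1 : ℝ) / 2) ≤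
        (cylIntegral β m fun p => (Ω p) ^ 2) ^ ((1 : ℝ) / 2) ∧
      (cylIntegral β m fun p => (pdr (pdz f) p) ^ 2 + (pdz (pdz f) p) ^ 2) ^ ((1 : ℝ) / 2) ≤
        (cylIntegral β m fun p => (pdz Ω p) ^ 2) ^ ((1 : ℝ) / 2) := by
  exact grad_bounds_from_Omega_general (zero_le_one.trans hβ.le) m 3 hf hΩ heq hfV hfz
    fun p hp => hΩ0 p (Or.inl hp)
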